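/- arXiv:1804.03654 — 2 statements merged into one kernel-verified Lean document; each statement's English description precedes it below -/
import Mathlib

section
/- (Turán's power sum inequality.) Let ν ≥ 1 and let z₁,…,z_ν ∈ ℂ. If K is an integer with K ≥ ν, then there exists an integer k with K ≤ k ≤ 2K such that |z₁^k + z₂^k + ⋯ + z_ν^k| ≥ (|z₁|/50)^k. -/
/-!
After scaling, `max |z j| = 1`. Let `P = ∏ j, (X - z j)` and `S k = ∑ j, b j * z j ^ k`, and
consider the function `f w = ∑ j, b j * z j ^ K / (w ^ K * (w - z j))` on a circle `|w| = r < 1`. At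
infinity `f` vanishes to order at least `2`, so `∮ f` is minus the sum of the residues outside the
circle, that is `-2πi` times the sum of the `b j` with `r < |z j|`; for `b j = 1` this sum is at
least `1`. On the other hand `w ^ K * P w * f w` is a polynomial in `w` whose coefficients are
combinations of `S K, …, S (K + n - 1)`, so `f` is small on the circle if all of these are small and
`|P|` is not. Chebyshev's theorem on the sup norm of monic polynomials, applied to
`∏ j, (X - |z j|)` on `[1/2, 1]`, provides an `r` for which `|P|` is bounded below on the circle by
an exponential in `n`.
-/

open Polynomial Finset Metric

section Chebyshev

theorem exists_mem_Icc_leadingCoeff_le_abs_eval (P : ℝ[X]) {a b : ℝ} (hab : a < b) :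
    ∃ x ∈ Set.Icc a b,
      ((b - a) / 2) ^ P.natDegree * P.leadingCoeff ≤ 2 ^ (P.natDegree - 1) * |P.eval x| := by
  by_contra! hlt
  set n := P.natDegree
  set D := ((b - a) / 2) ^ n * P.leadingCoeff
  have hD : 0 < D := lt_of_le_of_lt (by positivity) (hlt a (Set.left_mem_Icc.2 hab.le))
  set L : ℝ[X] := C ((b - a) / 2) * X + C ((a + b) / 2)
  have hslope : (b - a) / 2 ≠ 0 := by linarith
  have hL : L.natDegree = 1 := natDegree_linear hslope
  set Q : ℝ[X] := C (2 ^ (n - 1) / D) * P.comp L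
  have hQ_lt : ∀ y ∈ Set.Icc (-1 : ℝ) 1, |Q.eval y| < 1 := by
    rintro y ⟨hy₁, hy₂⟩
    have hy := hlt ((b - a) / 2 * y + (a + b) / 2) ⟨by nlinarith, by nlinarith⟩
    simpa [Q, L, abs_mul, abs_div, abs_of_pos hD, div_mul_eq_mul_div, div_lt_one hD] using hy
  have hQ_natDegree : (P.comp L).natDegree = n := by rw [natDegree_comp, hL, mul_one]
  have hQ_degree : Q.degree ≤ n := by
    rw [← hQ_natDegree]
    exact degree_le_of_natDegree_le (natDegree_C_mul_le _ _)
  have hQ_coeff : Q.coeff n = 2 ^ (n - 1) := by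
    have hcomp : (P.comp L).leadingCoeff = D := by
      rw [leadingCoeff_comp (by omega), leadingCoeff_linear hslope, mul_comm]
    rw [leadingCoeff, hQ_natDegree] at hcomp
    rw [coeff_C_mul, hcomp, div_mul_cancel₀ _ hD.ne']
  have hQ_eq : Q = Chebyshev.T ℝ n :=
    (Chebyshev.coeff_eq_iff_of_forall_abs_le_one hQ_degree fun y hy => (hQ_lt y hy).le).1 hQ_coeff
  simpa [hQ_eq] using hQ_lt 1 (by simp)

theorem exists_mem_Icc_ne_and_le_prod_abs_sub {ι : Type*} [Fintype ι] (t : ι → ℝ) {a b : ℝ}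
    (hab : a < b) :
    ∃ x ∈ Set.Icc a b, (∀ i, t i ≠ x) ∧
      ((b - a) / 2) ^ Fintype.card ι ≤ 2 ^ (Fintype.card ι - 1) * ∏ i, |x - t i| := by
  obtain ⟨x, hx, hle⟩ := exists_mem_Icc_leadingCoeff_le_abs_eval (∏ i, (X - C (t i))) hab
  rw [(monic_prod_X_sub_C t univ).leadingCoeff, natDegree_finsetProd_X_sub_C_eq_card, mul_one,
    card_univ, eval_prod, abs_prod] at hle
  simp only [eval_sub, eval_X, eval_C] at hle
  refine ⟨x, hx, ?_, hle⟩
  rintro i rfl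
  rw [prod_eq_zero (mem_univ i) (by simp), mul_zero] at hle
  exact hle.not_gt (pow_pos (by linarith) _)

end Chebyshev

section PartialFractions

theorem eval_sub_eval_eq_sum_mul_sub {R : Type*} [CommRing R] (P : R[X]) (x y : R) :
    P.eval x - P.eval y =
      (∑ i ∈ range (P.natDegree + 1), P.coeff i * ∑ l ∈ range i, x ^ l * y ^ (i - 1 - l)) *
        (x - y) := by
  simp only [eval_eq_sum_range, ← sum_sub_distrib, sum_mul, mul_assoc, ← mul_sub]
  simp only [← sum_mul, ← mul_assoc, geom_sum₂_mul]

variable {ι : Type*} [Fintype ι]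

theorem eval_mul_sum_div_sub {F : Type*} [Field F] {P : F[X]} {z : ι → F}
    (hz : ∀ j, P.IsRoot (z j)) (b : ι → F) (K : ℕ) {w : F} (hw : ∀ j, w ≠ z j) :
    P.eval w * ∑ j, b j * z j ^ K / (w - z j) =
      ∑ i ∈ range (P.natDegree + 1), P.coeff i *
        ∑ l ∈ range i, w ^ l * ∑ j, b j * z j ^ (K + (i - 1 - l)) := by
  have hterm (j : ι) : P.eval w * (b j * z j ^ K / (w - z j)) =
      ∑ i ∈ range (P.natDegree + 1), P.coeff i *
        ∑ l ∈ range i, w ^ l * (b j * z j ^ (K + (i - 1 - l))) := by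
    have hfactor := eval_sub_eval_eq_sum_mul_sub P w (z j)
    rw [(hz j).eq_zero, sub_zero] at hfactor
    rw [hfactor, mul_assoc, mul_div_cancel₀ _ (sub_ne_zero.2 (hw j)), sum_mul]
    simp only [mul_assoc, sum_mul, pow_add]
    refine sum_congr rfl fun i _ => congr_arg _ (sum_congr rfl fun l _ => ?_)
    ring
  rw [mul_sum, sum_congr rfl fun j _ => hterm j, sum_comm]
  refine sum_congr rfl fun i _ => ?_
  rw [← mul_sum, sum_comm]
  simp only [mul_sum]

variable {𝕜 : Type*} [NormedField 𝕜]

theorem norm_eval_mul_sum_div_sub_le {P : 𝕜[X]} {z : ι → 𝕜} (hz : ∀ j, P.IsRoot (z j))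
    {b : ι → 𝕜} {K : ℕ} {M : ℝ}
    (hM : ∀ k ∈ Ico K (K + P.natDegree), ‖∑ j, b j * z j ^ k‖ ≤ M)
    {w : 𝕜} (hw : ‖w‖ ≤ 1) (hwz : ∀ j, w ≠ z j) :
    ‖P.eval w * ∑ j, b j * z j ^ K / (w - z j)‖ ≤
      (∑ i ∈ range (P.natDegree + 1), i * ‖P.coeff i‖) * M := by
  rw [eval_mul_sum_div_sub hz b K hwz, sum_mul]
  refine norm_sum_le_of_le _ fun i hi => ?_
  have hinner : ‖∑ l ∈ range i, w ^ l * ∑ j, b j * z j ^ (K + (i - 1 - l))‖ ≤ i * M := by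
    have hterm : ∀ l ∈ range i, ‖w ^ l * ∑ j, b j * z j ^ (K + (i - 1 - l))‖ ≤ M := by
      intro l hl
      rw [mem_range] at hi hl
      rw [norm_mul, norm_pow]
      exact (mul_le_of_le_one_left (norm_nonneg _) (pow_le_one₀ (norm_nonneg _) hw)).trans
        (hM _ (mem_Ico.2 ⟨by omega, by omega⟩))
    simpa using norm_sum_le_of_le _ hterm
  rw [norm_mul, mul_comm (i : ℝ), mul_assoc]
  gcongr

theorem sum_mul_norm_coeff_prod_X_sub_C_le {z : ι → 𝕜} (hz : ∀ j, ‖z j‖ ≤ 1) :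
    ∑ i ∈ range (Fintype.card ι + 1), i * ‖(∏ j, (X - C (z j))).coeff i‖ ≤
      Fintype.card ι * 2 ^ (Fintype.card ι - 1) := by
  have hcoeff (i : ℕ) : ‖(∏ j, (X - C (z j))).coeff i‖ ≤ (Fintype.card ι).choose i := by
    have hroots : ∀ y ∈ ((∏ j, (X - C (z j))).map (RingHom.id 𝕜)).roots, ‖y‖ ≤ 1 := by
      intro y hy
      obtain ⟨j, rfl⟩ : ∃ j, y = z j := by
        have hroot := isRoot_of_mem_roots hy
        rw [Polynomial.map_id, IsRoot, eval_prod, prod_eq_zero_iff] at hroot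
        simpa [sub_eq_zero] using hroot
      exact hz j
    simpa using coeff_le_of_roots_le i (monic_prod_X_sub_C z univ)
      ((Splits.prod fun j _ => Splits.X_sub_C (z j)).map _) hroots
  calc ∑ i ∈ range (Fintype.card ι + 1), i * ‖(∏ j, (X - C (z j))).coeff i‖
      ≤ ∑ i ∈ range (Fintype.card ι + 1), (i * (Fintype.card ι).choose i : ℝ) := by
        gcongr with i
        exact hcoeff i
    _ = Fintype.card ι * 2 ^ (Fintype.card ι - 1) := by
        exact_mod_cast Nat.sum_range_mul_choose (Fintype.card ι)

theorem pow_mul_prod_mul_norm_sum_div_le {z : ι → 𝕜} (hz : ∀ j, ‖z j‖ ≤ 1) {b : ι → 𝕜}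
    {K : ℕ} {M : ℝ} (hM : ∀ k ∈ Ico K (K + Fintype.card ι), ‖∑ j, b j * z j ^ k‖ ≤ M)
    {w : 𝕜} (hw₀ : w ≠ 0) (hw₁ : ‖w‖ ≤ 1) (hwz : ∀ j, w ≠ z j) :
    ‖w‖ ^ K * (∏ j, |‖w‖ - ‖z j‖|) * ‖∑ j, b j * (z j ^ K / (w ^ K * (w - z j)))‖ ≤
      Fintype.card ι * 2 ^ (Fintype.card ι - 1) * M := by
  set P : 𝕜[X] := ∏ j, (X - C (z j)) with hP
  have hdegree : P.natDegree = Fintype.card ι := natDegree_finsetProd_X_sub_C_eq_card univ z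
  have heval (x : 𝕜) : P.eval x = ∏ j, (x - z j) := by simp [hP, eval_prod]
  have hroot (j : ι) : P.IsRoot (z j) := by
    rw [IsRoot, heval]
    exact prod_eq_zero (mem_univ j) (sub_self _)
  have hprod : ∏ j, |‖w‖ - ‖z j‖| ≤ ‖P.eval w‖ := by
    rw [heval, norm_prod]
    exact prod_le_prod (fun _ _ => abs_nonneg _) fun j _ => abs_norm_sub_norm_le _ _
  have hsum : w ^ K * ∑ j, b j * (z j ^ K / (w ^ K * (w - z j))) =
      ∑ j, b j * z j ^ K / (w - z j) := by
    rw [mul_sum]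
    refine sum_congr rfl fun j _ => ?_
    have := sub_ne_zero.2 (hwz j)
    field_simp
  calc ‖w‖ ^ K * (∏ j, |‖w‖ - ‖z j‖|) * ‖∑ j, b j * (z j ^ K / (w ^ K * (w - z j)))‖
      ≤ ‖w‖ ^ K * ‖P.eval w‖ * ‖∑ j, b j * (z j ^ K / (w ^ K * (w - z j)))‖ := by gcongr
    _ = ‖P.eval w * ∑ j, b j * z j ^ K / (w - z j)‖ := by
        rw [← hsum, norm_mul, norm_mul, norm_pow]
        ring
    _ ≤ (∑ i ∈ range (P.natDegree + 1), i * ‖P.coeff i‖) * M :=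
        norm_eval_mul_sum_div_sub_le hroot (by rwa [hdegree]) hw₁ hwz
    _ ≤ Fintype.card ι * 2 ^ (Fintype.card ι - 1) * M := by
        obtain hempty | hnonempty := isEmpty_or_nonempty ι
        · simp [hdegree]
        have hM₀ : 0 ≤ M := (norm_nonneg _).trans
          (hM K (mem_Ico.2 ⟨le_rfl, by simp [Fintype.card_pos]⟩))
        rw [hdegree]
        gcongr
        exact sum_mul_norm_coeff_prod_X_sub_C_le hz

end PartialFractions

section CircleIntegral

open Complex Real

theorem circleIntegral_sub_inv_eq_ite {r : ℝ} (hr : 0 < r) {z : ℂ} (hz : ‖z‖ ≠ r) :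
    (∮ w in C(0, r), (w - z)⁻¹) = if r < ‖z‖ then 0 else 2 * π * I := by
  split_ifs with hrz
  · refine DiffContOnCl.circleIntegral_eq_zero hr.le (DifferentiableOn.diffContOnCl ?_)
    rw [closure_ball _ hr.ne']
    refine DifferentiableOn.inv (by fun_prop) fun w hw => sub_ne_zero.2 ?_
    rintro rfl
    exact hrz.not_ge (mem_closedBall_zero_iff.1 hw)
  · exact circleIntegral.integral_sub_inv_of_mem_ball
      (mem_ball_zero_iff.2 (lt_of_le_of_ne (not_lt.1 hrz) hz))

theorem circleIntegrable_pow_div_pow_mul_sub {r : ℝ} (hr : 0 < r) {z : ℂ} (hz : ‖z‖ ≠ r) (K : ℕ) :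
    CircleIntegrable (fun w => z ^ K / (w ^ K * (w - z))) 0 r := by
  refine ContinuousOn.circleIntegrable hr.le (ContinuousOn.div (by fun_prop) (by fun_prop) ?_)
  intro w hw
  refine mul_ne_zero (pow_ne_zero _ (ne_of_mem_sphere hw hr.ne')) (sub_ne_zero.2 ?_)
  rintro rfl
  exact hz (mem_sphere_zero_iff_norm.1 hw)

theorem circleIntegral_pow_succ_div_pow_succ_mul_sub {r : ℝ} (hr : 0 < r) {z : ℂ} (hz : ‖z‖ ≠ r)
    (k : ℕ) :
    (∮ w in C(0, r), z ^ (k + 1) / (w ^ (k + 1) * (w - z))) =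
      (∮ w in C(0, r), z ^ k / (w ^ k * (w - z))) -
        z ^ k * ∮ w in C(0, r), (w - 0) ^ (-(k : ℤ) - 1) := by
  have hint : CircleIntegrable (fun w : ℂ => z ^ k * (w - 0) ^ (-(k : ℤ) - 1)) 0 r :=
    (circleIntegrable_sub_zpow_iff.2 (by simp [abs_of_pos hr, hr.ne])).const_smul
  rw [← circleIntegral.integral_const_mul,
    ← circleIntegral.integral_sub (circleIntegrable_pow_div_pow_mul_sub hr hz k) hint]
  refine circleIntegral.integral_congr hr.le fun w hw => ?_
  have hw₀ : w ≠ 0 := ne_of_mem_sphere hw hr.ne'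
  have hwz : w - z ≠ 0 := by
    rw [sub_ne_zero]
    rintro rfl
    exact hz (mem_sphere_zero_iff_norm.1 hw)
  have hzpow : (w - 0) ^ (-(k : ℤ) - 1) = (w ^ (k + 1))⁻¹ := by
    rw [sub_zero, ← neg_add', ← Nat.cast_succ, zpow_neg, zpow_natCast]
  simp only [hzpow]
  field_simp
  ring

theorem circleIntegral_pow_div_pow_mul_sub {r : ℝ} (hr : 0 < r) {z : ℂ} (hz : ‖z‖ ≠ r) {K : ℕ}
    (hK : K ≠ 0) :
    (∮ w in C(0, r), z ^ K / (w ^ K * (w - z))) = if r < ‖z‖ then -(2 * π * I) else 0 := by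
  induction K, Nat.one_le_iff_ne_zero.2 hK using Nat.le_induction with
  | base =>
    have hinv : (∮ w in C(0, r), (w - 0 : ℂ) ^ (-((0 : ℕ) : ℤ) - 1)) = 2 * π * I := by
      simpa using circleIntegral.integral_sub_center_inv 0 hr.ne'
    rw [circleIntegral_pow_succ_div_pow_succ_mul_sub hr hz, hinv]
    simp only [pow_zero, one_mul, one_div, circleIntegral_sub_inv_eq_ite hr hz]
    split_ifs <;> ring
  | succ k hk ih =>
    rw [circleIntegral_pow_succ_div_pow_succ_mul_sub hr hz, ih (by omega),
      circleIntegral.integral_sub_zpow_of_ne (by omega), mul_zero, sub_zero]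

variable {ι : Type*} [Fintype ι]

theorem circleIntegral_sum_pow_div_pow_mul_sub {r : ℝ} (hr : 0 < r) {z : ι → ℂ}
    (hz : ∀ j, ‖z j‖ ≠ r) (b : ι → ℂ) {K : ℕ} (hK : K ≠ 0) :
    (∮ w in C(0, r), ∑ j, b j * (z j ^ K / (w ^ K * (w - z j)))) =
      -(2 * π * I) * ∑ j with r < ‖z j‖, b j := by
  have hint : ∀ j ∈ univ, CircleIntegrable (fun w => b j * (z j ^ K / (w ^ K * (w - z j)))) 0 r :=
    fun j _ => (circleIntegrable_pow_div_pow_mul_sub hr (hz j) K).const_smul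
  rw [circleIntegral.integral_fun_sum hint]
  simp only [circleIntegral.integral_const_mul,
    circleIntegral_pow_div_pow_mul_sub hr (hz _) hK, mul_ite, mul_zero, ← sum_filter, ← sum_mul]
  rw [mul_comm]

theorem pow_mul_prod_mul_norm_sum_filter_lt_le {z : ι → ℂ} (hz : ∀ j, ‖z j‖ ≤ 1) {b : ι → ℂ} {K : ℕ}
    (hK : K ≠ 0) {M : ℝ} (hM : ∀ k ∈ Ico K (K + Fintype.card ι), ‖∑ j, b j * z j ^ k‖ ≤ M)
    {r : ℝ} (hr₀ : 0 < r) (hr₁ : r ≤ 1) (hzr : ∀ j, ‖z j‖ ≠ r) :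
    r ^ K * (∏ j, |r - ‖z j‖|) * ‖∑ j with r < ‖z j‖, b j‖ ≤
      r * (Fintype.card ι * 2 ^ (Fintype.card ι - 1) * M) := by
  have hpos : 0 < r ^ K * ∏ j, |r - ‖z j‖| := by
    have := prod_pos fun j (_ : j ∈ univ) => abs_pos.2 (sub_ne_zero.2 (hzr j).symm)
    positivity
  have hbound : ∀ w ∈ sphere (0 : ℂ) r, ‖∑ j, b j * (z j ^ K / (w ^ K * (w - z j)))‖ ≤
      Fintype.card ι * 2 ^ (Fintype.card ι - 1) * M / (r ^ K * ∏ j, |r - ‖z j‖|) := by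
    intro w hw
    obtain rfl := mem_sphere_zero_iff_norm.1 hw
    rw [le_div_iff₀' hpos]
    exact pow_mul_prod_mul_norm_sum_div_le hz hM (norm_pos_iff.1 hr₀) hr₁
      fun j hj => hzr j (hj ▸ rfl)
  have hintegral := circleIntegral.norm_two_pi_i_inv_smul_integral_le_of_norm_le_const hr₀.le hbound
  rw [circleIntegral_sum_pow_div_pow_mul_sub hr₀ hzr b hK, smul_eq_mul, neg_mul, mul_neg, norm_neg,
    inv_mul_cancel_left₀ two_pi_I_ne_zero, ← mul_div_assoc, le_div_iff₀' hpos] at hintegral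
  exact hintegral

end CircleIntegral

section PowerSum

variable {ι : Type*} [Fintype ι]

theorem pow_mul_prod_abs_sub_norm_le {z : ι → ℂ} (hz : ∀ j, ‖z j‖ ≤ 1) {K : ℕ} (hK : K ≠ 0) {M : ℝ}
    (hM : ∀ k ∈ Ico K (K + Fintype.card ι), ‖∑ j, z j ^ k‖ ≤ M) {r : ℝ} (hr : 0 < r)
    (hzr : ∀ j, ‖z j‖ ≠ r) {j₀ : ι} (hj₀ : r < ‖z j₀‖) :
    r ^ K * ∏ j, |r - ‖z j‖| ≤ r * (Fintype.card ι * 2 ^ (Fintype.card ι - 1) * M) := by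
  have hcount : 1 ≤ ‖∑ j with r < ‖z j‖, (1 : ℂ)‖ := by
    simpa using card_pos.2 ⟨j₀, mem_filter.2 ⟨mem_univ j₀, hj₀⟩⟩
  calc r ^ K * ∏ j, |r - ‖z j‖|
      ≤ r ^ K * (∏ j, |r - ‖z j‖|) * ‖∑ j with r < ‖z j‖, (1 : ℂ)‖ :=
        le_mul_of_one_le_right (by positivity) hcount
    _ ≤ r * (Fintype.card ι * 2 ^ (Fintype.card ι - 1) * M) :=
        pow_mul_prod_mul_norm_sum_filter_lt_le hz hK (by simpa using hM) hr
          (hj₀.le.trans (hz j₀)) hzr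

theorem exists_one_le_mul_norm_sum_pow {z : ι → ℂ} (hz : ∀ j, ‖z j‖ ≤ 1) {j₀ : ι}
    (hj₀ : ‖z j₀‖ = 1) {K : ℕ} (hK : K ≠ 0) :
    ∃ k ∈ Ico K (K + Fintype.card ι),
      1 ≤ Fintype.card ι * 2 ^ K * 16 ^ Fintype.card ι / 4 * ‖∑ j, z j ^ k‖ := by
  have hn : Fintype.card ι ≠ 0 := (Fintype.card_pos_iff.2 ⟨j₀⟩).ne'
  obtain ⟨k, hk, hk_max⟩ := exists_max_image (Ico K (K + Fintype.card ι))
    (fun k => ‖∑ j, z j ^ k‖) (nonempty_Ico.2 (by omega))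
  refine ⟨k, hk, ?_⟩
  obtain ⟨r, ⟨hr_half, hr₁⟩, hzr, hprod⟩ :=
    exists_mem_Icc_ne_and_le_prod_abs_sub (fun j => ‖z j‖) (by norm_num : (1 / 2 : ℝ) < 1)
  have hr₀ : 0 < r := by linarith
  have hrz : r < ‖z j₀‖ := lt_of_le_of_ne (hr₁.trans_eq hj₀.symm) (hzr j₀).symm
  have hupper := pow_mul_prod_abs_sub_norm_le hz hK hk_max hr₀ hzr hrz
  set n := Fintype.card ι
  set S := ‖∑ j, z j ^ k‖
  set A := ∏ j, |r - ‖z j‖|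
  have hA : (1 / 2) ^ K * A ≤ n * 2 ^ (n - 1) * S :=
    calc (1 / 2) ^ K * A ≤ r ^ K * A := by gcongr
      _ ≤ r * (n * 2 ^ (n - 1) * S) := hupper
      _ ≤ n * 2 ^ (n - 1) * S := mul_le_of_le_one_left (by positivity) hr₁
  calc (1 : ℝ) = 2 ^ K * 4 ^ n * ((1 / 2) ^ K * ((1 - 1 / 2) / 2) ^ n) := by
        rw [mul_mul_mul_comm, ← mul_pow, ← mul_pow]
        norm_num
    _ ≤ 2 ^ K * 4 ^ n * (2 ^ (n - 1) * ((1 / 2) ^ K * A)) := by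
        rw [mul_left_comm (2 ^ (n - 1))]
        gcongr
    _ ≤ 2 ^ K * 4 ^ n * (2 ^ (n - 1) * (n * 2 ^ (n - 1) * S)) := by gcongr
    _ = n * 2 ^ K * 16 ^ n / 4 * S := by
        obtain ⟨m, hm⟩ := Nat.exists_eq_succ_of_ne_zero hn
        have h16 : (16 : ℝ) ^ m = 4 ^ m * (2 ^ m * 2 ^ m) := by
          rw [← mul_pow, ← mul_pow]
          norm_num
        rw [hm, Nat.succ_sub_one, pow_succ, pow_succ, h16]
        ring

theorem exists_forall_norm_pow_le_mul_norm_sum_pow [Nonempty ι] (z : ι → ℂ) {K : ℕ} (hK : K ≠ 0) :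
    ∃ k ∈ Ico K (K + Fintype.card ι), ∀ j,
      ‖z j‖ ^ k ≤ Fintype.card ι * 2 ^ K * 16 ^ Fintype.card ι / 4 * ‖∑ i, z i ^ k‖ := by
  obtain ⟨j₀, hj₀⟩ := Finite.exists_max fun j => ‖z j‖
  obtain hzero | hpos := (norm_nonneg (z j₀)).eq_or_lt
  · refine ⟨K, mem_Ico.2 ⟨le_rfl, by simp [Fintype.card_pos]⟩, fun j => ?_⟩
    have hj : ‖z j‖ = 0 := le_antisymm (hzero ▸ hj₀ j) (norm_nonneg _)
    rw [hj, zero_pow hK]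
    positivity
  have hscale (j : ι) : ‖z j / ‖z j₀‖‖ = ‖z j‖ / ‖z j₀‖ := by simp
  obtain ⟨k, hk, hle⟩ := exists_one_le_mul_norm_sum_pow (z := fun j => z j / ‖z j₀‖) (j₀ := j₀)
    (fun j => by rw [hscale, div_le_one hpos]; exact hj₀ j) (by rw [hscale, div_self hpos.ne']) hK
  refine ⟨k, hk, fun j => (pow_le_pow_left₀ (norm_nonneg _) (hj₀ j) k).trans ?_⟩
  simpa [div_pow, ← sum_div, ← mul_div_assoc, one_le_div (pow_pos hpos k)] using hle

theorem mul_two_pow_mul_sixteen_pow_div_four_le {n K : ℕ} (h : n ≤ K) :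
    (n * 2 ^ K * 16 ^ n / 4 : ℝ) ≤ 50 ^ K := by
  have hBernoulli : (K / 4 : ℝ) ≤ (25 / 16) ^ K :=
    calc (K / 4 : ℝ) ≤ 1 + K * (9 / 16) := by linarith [K.cast_nonneg (α := ℝ)]
      _ ≤ (1 + 9 / 16) ^ K := one_add_mul_le_pow (by norm_num) K
      _ = (25 / 16) ^ K := by norm_num
  calc (n * 2 ^ K * 16 ^ n / 4 : ℝ) ≤ K * 2 ^ K * 16 ^ K / 4 := by gcongr; norm_num
    _ = K / 4 * (2 * 16) ^ K := by rw [mul_pow]; ring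
    _ ≤ (25 / 16) ^ K * (2 * 16) ^ K := by gcongr
    _ = 50 ^ K := by rw [← mul_pow]; norm_num

theorem turan_power_sum_general [Nonempty ι] (z : ι → ℂ) {K : ℕ} (hK : Fintype.card ι ≤ K) :
    ∃ k ∈ Ico K (K + Fintype.card ι), ∀ j, (‖z j‖ / 50) ^ k ≤ ‖∑ i, z i ^ k‖ := by
  have hK₀ : K ≠ 0 := (Fintype.card_pos.trans_le hK).ne'
  obtain ⟨k, hk, hle⟩ := exists_forall_norm_pow_le_mul_norm_sum_pow z hK₀
  refine ⟨k, hk, fun j => ?_⟩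
  rw [div_pow, div_le_iff₀' (by positivity)]
  refine (hle j).trans ?_
  gcongr
  exact (mul_two_pow_mul_sixteen_pow_div_four_le hK).trans
    (pow_le_pow_right₀ (by norm_num) (mem_Ico.1 hk).1)

end PowerSum

/-- **Turán's power sum inequality.** Let `ν ≥ 1` and `z₁, …, z_ν ∈ ℂ`. If `K` is an
integer with `K ≥ ν`, then there is an integer `k ∈ [K, 2K]` such that
`|z₁^k + ⋯ + z_ν^k| ≥ (|z₁|/50)^k`. -/
theorem turan_power_sum (ν : ℕ) (hν : 1 ≤ ν) (z : Fin ν → ℂ) (K : ℕ) (hK : ν ≤ K) :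
    ∃ k : ℕ, K ≤ k ∧ k ≤ 2 * K ∧
      (‖z ⟨0, hν⟩‖ / 50) ^ k ≤ ‖∑ j : Fin ν, z j ^ k‖ := by
  have : Nonempty (Fin ν) := ⟨⟨0, hν⟩⟩
  obtain ⟨k, hk, hle⟩ := turan_power_sum_general z (by simpa using hK)
  rw [mem_Ico, Fintype.card_fin] at hk
  exact ⟨k, hk.1, by omega, hle _⟩
end

section
/- (Gallagher's lemma.) There is an absolute constant C > 0 such that for every T ≥ 1 and every finitely supported sequence of complex numbers (a_n)_{n≥1}, one has ∫_{−T}^{T} |Σ_{n≥1} a_n n^{−it}|² dt ≤ C·T²·∫_0^∞ |Σ_{w < n ≤ w·e^{1/T}} a_n|² dw/w. -/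
open Complex MeasureTheory

/-!
Put `w = e^y` and `δ = 1/T`. The sum of `a n` over `w < n ≤ w e^δ` becomes
`∑ n, a n 1_{[-δ, 0)}(y - log n)`, the convolution of a window of length `δ` with the discrete
measure of mass `a n` at each `log n`. The Fourier transform of this convolution at `t / 2π` is the
Dirichlet polynomial at `t` times the Fourier transform of the window, and the latter is at least
`δ / 2` in absolute value for `|t| ≤ 1/δ = T`, because `cos ≥ 1/2` on `[-1, 1]`. Plancherel's
theorem concludes.
-/

section Lp

open scoped ENNReal

variable {α E : Type*} [MeasurableSpace α] {μ : Measure α} [NormedAddCommGroup E] {p : ℝ≥0∞}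

lemma memLp_tsum {ι : Type*} [Countable ι] [CompleteSpace E] [Fact (1 ≤ p)] {f : ι → α → E}
    (hf : ∀ i, MemLp (f i) p μ) (hsum : ∑' i, eLpNorm (f i) p μ ≠ ∞) :
    MemLp (fun x ↦ ∑' i, f i x) p μ := by
  have hlim : ⇑(∑' i, (hf i).toLp (f i)) =ᵐ[μ] fun x ↦ ∑' i, (hf i).toLp (f i) x :=
    Lp.coeFn_tsum (by simpa only [Lp.enorm_toLp] using hsum)
  refine (memLp_congr_ae ?_).1 (Lp.memLp (∑' i, (hf i).toLp (f i)))
  filter_upwards [hlim, ae_all_iff.2 fun i ↦ (hf i).coeFn_toLp] with x hlim_x hcoe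
  simp only [hlim_x, hcoe]

variable {𝕜 : Type*} [NontriviallyNormedField 𝕜] [NormedSpace 𝕜 E]

lemma memLp_smul_const {f : α → 𝕜} (hf : MemLp f p μ) (c : E) : MemLp (fun x ↦ f x • c) p μ :=
  (ContinuousLinearMap.toSpanSingleton 𝕜 c).comp_memLp' hf

lemma eLpNorm_smul_const (f : α → 𝕜) (c : E) :
    eLpNorm (fun x ↦ f x • c) p μ = ‖c‖ₑ * eLpNorm f p μ := by
  calc eLpNorm (fun x ↦ f x • c) p μ
      = eLpNorm (‖c‖ • fun x ↦ ‖f x‖) p μ := eLpNorm_congr_norm_ae <| .of_forall fun x ↦ by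
        simp [norm_smul, mul_comm]
    _ = ‖c‖ₑ * eLpNorm f p μ := by
        rw [eLpNorm_const_smul, eLpNorm_norm, enorm_norm]

end Lp

section Fourier

open FourierTransform Real
open scoped RealInnerProductSpace SchwartzMap

variable {V F : Type*} [NormedAddCommGroup V] [InnerProductSpace ℝ V] [FiniteDimensional ℝ V]
  [MeasurableSpace V] [BorelSpace V] [NormedAddCommGroup F]

section NormedSpace

variable [NormedSpace ℂ F]

lemma continuous_fourier_of_integrable {f : V → F} (hf : Integrable f) : Continuous (𝓕 f) :=
  VectorFourier.fourierIntegral_continuous continuous_fourierChar (innerSL ℝ).continuous₂ hf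

lemma fourier_comp_sub_smul_const [CompleteSpace F] (k : V → ℂ) (x : V) (c : F) (w : V) :
    𝓕 (fun v ↦ k (v - x) • c) w = 𝓕 k w • 𝐞 (-⟪x, w⟫) • c := by
  have htranslate : 𝓕 (fun v ↦ k (v - x)) w = 𝐞 (-⟪x, w⟫) • 𝓕 k w := by
    simpa [← sub_eq_add_neg] using! congrFun
      (VectorFourier.fourierIntegral_comp_add_right 𝐞 volume (innerₗ V) k (-x)) w
  calc 𝓕 (fun v ↦ k (v - x) • c) w
      = 𝓕 (fun v ↦ k (v - x)) w • c := by
        simp only [fourier_eq, ← smul_assoc]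
        exact integral_smul_const _ c
    _ = 𝓕 k w • 𝐞 (-⟪x, w⟫) • c := by
        rw [htranslate, smul_assoc, smul_comm]

lemma integral_schwartz_smul_fourier [CompleteSpace F] (φ : 𝓢(V, ℂ)) {f : V → F}
    (hf : Integrable f) : ∫ w, φ w • 𝓕 f w = ∫ v, 𝓕 φ v • f v := by
  simpa using! (VectorFourier.integral_fourierIntegral_smul_eq_flip (L := innerₗ V)
    continuous_fourierChar continuous_inner φ.integrable hf).symm

end NormedSpace

section InnerProductSpace

variable [InnerProductSpace ℂ F] [CompleteSpace F]

lemma fourier_toLp_ae_eq {f : V → F} (hf₁ : Integrable f) (hf₂ : MemLp f 2) :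
    (𝓕 (hf₂.toLp f) : Lp F 2 (volume : Measure V)) =ᵐ[volume] 𝓕 f := by
  -- The two sides induce the same tempered distribution, so they agree against test functions.
  refine ae_eq_of_integral_contDiff_smul_eq ((Lp.memLp _).locallyIntegrable one_le_two)
    (continuous_fourier_of_integrable hf₁).locallyIntegrable fun g hg hgc ↦ ?_
  let φ : 𝓢(V, ℂ) := HasCompactSupport.toSchwartzMap (f := Complex.ofRealCLM ∘ g)
    (hgc.comp_left rfl) (by fun_prop)
  calc ∫ w, g w • (𝓕 (hf₂.toLp f) : Lp F 2 (volume : Measure V)) w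
      = Lp.toTemperedDistribution (𝓕 (hf₂.toLp f)) φ := by
        simp [φ]
    _ = ∫ v, 𝓕 φ v • hf₂.toLp f v := by
        rw [← Lp.fourier_toTemperedDistribution_eq, TemperedDistribution.fourier_apply,
          Lp.toTemperedDistribution_apply]
    _ = ∫ v, 𝓕 φ v • f v := integral_congr_ae <| by
        filter_upwards [hf₂.coeFn_toLp] with v hv
        rw [hv]
    _ = ∫ w, φ w • 𝓕 f w := (integral_schwartz_smul_fourier φ hf₁).symm
    _ = ∫ w, g w • 𝓕 f w := by simp [φ]

lemma memLp_two_fourier {f : V → F} (hf₁ : Integrable f) (hf₂ : MemLp f 2) : MemLp (𝓕 f) 2 :=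
  (memLp_congr_ae (fourier_toLp_ae_eq hf₁ hf₂)).1 (Lp.memLp _)

lemma integral_norm_sq_fourier {f : V → F} (hf₁ : Integrable f) (hf₂ : MemLp f 2) :
    ∫ w, ‖𝓕 f w‖ ^ 2 = ∫ v, ‖f v‖ ^ 2 := by
  have hplancherel := Lp.inner_fourier_eq (hf₂.toLp f) (hf₂.toLp f)
  rw [L2.inner_def, L2.inner_def] at hplancherel
  simp only [inner_self_eq_norm_sq_to_K] at hplancherel
  calc ∫ w, ‖𝓕 f w‖ ^ 2
      = ∫ w, ‖(𝓕 (hf₂.toLp f) : Lp F 2 (volume : Measure V)) w‖ ^ 2 := integral_congr_ae <| by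
        filter_upwards [fourier_toLp_ae_eq hf₁ hf₂] with w hw
        rw [hw]
    _ = ∫ v, ‖hf₂.toLp f v‖ ^ 2 := by
        simpa only [← RCLike.ofReal_pow, integral_ofReal, RCLike.ofReal_inj] using hplancherel
    _ = ∫ v, ‖f v‖ ^ 2 := integral_congr_ae <| by
        filter_upwards [hf₂.coeFn_toLp] with v hv
        rw [hv]

end InnerProductSpace

end Fourier

section ExpSum

open FourierTransform Real
open scoped RealInnerProductSpace ENNReal

variable {ι V F : Type*} [NormedAddCommGroup V] [InnerProductSpace ℝ V] [MeasurableSpace V]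
  [NormedAddCommGroup F]

section NormedSpace

variable [NormedSpace ℂ F]

/-- The exponential sum `∑ i, a i e(-⟨ν i, w⟩)` with coefficients `a` and frequencies `ν`, where
`e(x) = exp (2πix)`. -/
noncomputable def expSum (a : ι → F) (ν : ι → V) (w : V) : F :=
  ∑' i, 𝐞 (-⟪ν i, w⟫) • a i

/-- The convolution of `k` with the discrete measure of mass `a i` at each `ν i`, whose Fourier
transform is `expSum a ν`. -/
noncomputable def translateSum (k : V → ℂ) (a : ι → F) (ν : ι → V) (v : V) : F :=
  ∑' i, k (v - ν i) • a i

variable [FiniteDimensional ℝ V] [BorelSpace V] {k : V → ℂ} {a : ι → F} {ν : ι → V}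
  [Countable ι]

lemma fourier_translateSum [CompleteSpace F] (hk : Integrable k)
    (ha : Summable fun i ↦ ‖a i‖) (w : V) :
    𝓕 (translateSum k a ν) w = 𝓕 k w • expSum a ν w := by
  have hterm (i : ι) : Integrable fun v ↦ 𝐞 (-⟪v, w⟫) • k (v - ν i) • a i :=
    (fourierIntegral_convergent_iff w).2 ((hk.comp_sub_right (ν i)).smul_const (a i))
  have hsum : Summable fun i ↦ ∫ v, ‖𝐞 (-⟪v, w⟫) • k (v - ν i) • a i‖ := by
    simpa only [Circle.norm_smul, norm_smul, integral_mul_const,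
      integral_sub_right_eq_self (fun v ↦ ‖k v‖)] using ha.mul_left _
  calc 𝓕 (translateSum k a ν) w
      = ∫ v, ∑' i, 𝐞 (-⟪v, w⟫) • k (v - ν i) • a i := by
        simp only [fourier_eq, translateSum, Circle.smul_def, tsum_const_smul'']
    _ = ∑' i, 𝓕 (fun v ↦ k (v - ν i) • a i) w :=
        (integral_tsum_of_summable_integral_norm hterm hsum).symm
    _ = 𝓕 k w • expSum a ν w := by
        simp only [fourier_comp_sub_smul_const, tsum_const_smul'', expSum]

lemma memLp_translateSum [CompleteSpace F] {p : ℝ≥0∞} [Fact (1 ≤ p)] (hk : MemLp k p)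
    (ha : Summable fun i ↦ ‖a i‖) : MemLp (translateSum k a ν) p := by
  have htranslate (i : ι) : MemLp (fun v ↦ k (v - ν i)) p :=
    hk.comp_measurePreserving (measurePreserving_sub_right volume (ν i))
  have hnorm (i : ι) : eLpNorm (fun v ↦ k (v - ν i)) p = eLpNorm k p :=
    eLpNorm_comp_measurePreserving hk.1 (measurePreserving_sub_right volume (ν i))
  refine memLp_tsum (fun i ↦ memLp_smul_const (htranslate i) (a i)) ?_
  simp only [eLpNorm_smul_const, hnorm, ENNReal.tsum_mul_right]
  exact ENNReal.mul_ne_top (tsum_enorm_ne_top_iff_summable_norm.2 ha) hk.2.ne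

lemma integrable_translateSum [CompleteSpace F] (hk : Integrable k)
    (ha : Summable fun i ↦ ‖a i‖) : Integrable (translateSum k a ν) :=
  memLp_one_iff_integrable.1 (memLp_translateSum (memLp_one_iff_integrable.2 hk) ha)

end NormedSpace

section InnerProductSpace

variable [InnerProductSpace ℂ F] [CompleteSpace F] [FiniteDimensional ℝ V] [BorelSpace V]
  [Countable ι] {k : V → ℂ} {a : ι → F} {ν : ι → V}

lemma integral_norm_sq_fourier_mul_norm_sq_expSum (hk₁ : Integrable k) (hk₂ : MemLp k 2)
    (ha : Summable fun i ↦ ‖a i‖) :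
    ∫ w, ‖𝓕 k w‖ ^ 2 * ‖expSum a ν w‖ ^ 2 = ∫ v, ‖translateSum k a ν v‖ ^ 2 := by
  rw [← integral_norm_sq_fourier (integrable_translateSum hk₁ ha) (memLp_translateSum hk₂ ha)]
  simp only [fourier_translateSum hk₁ ha, norm_smul, mul_pow]

lemma integrable_norm_sq_fourier_mul_norm_sq_expSum (hk₁ : Integrable k) (hk₂ : MemLp k 2)
    (ha : Summable fun i ↦ ‖a i‖) :
    Integrable fun w ↦ ‖𝓕 k w‖ ^ 2 * ‖expSum a ν w‖ ^ 2 := by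
  have hmem := memLp_two_fourier (integrable_translateSum (ν := ν) hk₁ ha)
    (memLp_translateSum hk₂ ha)
  simpa only [fourier_translateSum hk₁ ha, norm_smul, mul_pow]
    using (memLp_two_iff_integrable_sq_norm hmem.1).1 hmem

lemma sq_mul_setIntegral_norm_sq_expSum_le (hk₁ : Integrable k) (hk₂ : MemLp k 2)
    (ha : Summable fun i ↦ ‖a i‖) {s : Set V} (hs : MeasurableSet s) {c : ℝ} (hc : 0 ≤ c)
    (hks : ∀ w ∈ s, c ≤ ‖𝓕 k w‖) :
    c ^ 2 * ∫ w in s, ‖expSum a ν w‖ ^ 2 ≤ ∫ v, ‖translateSum k a ν v‖ ^ 2 := by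
  have hint := integrable_norm_sq_fourier_mul_norm_sq_expSum (ν := ν) hk₁ hk₂ ha
  calc c ^ 2 * ∫ w in s, ‖expSum a ν w‖ ^ 2
      = ∫ w in s, c ^ 2 * ‖expSum a ν w‖ ^ 2 := (integral_const_mul _ _).symm
    _ ≤ ∫ w in s, ‖𝓕 k w‖ ^ 2 * ‖expSum a ν w‖ ^ 2 := by
        refine integral_mono_of_nonneg (.of_forall fun w ↦ by positivity) hint.integrableOn ?_
        filter_upwards [ae_restrict_mem hs] with w hw
        have hkw := hks w hw
        gcongr
    _ ≤ ∫ w, ‖𝓕 k w‖ ^ 2 * ‖expSum a ν w‖ ^ 2 :=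
        setIntegral_le_integral hint (.of_forall fun w ↦ by positivity)
    _ = ∫ v, ‖translateSum k a ν v‖ ^ 2 :=
        integral_norm_sq_fourier_mul_norm_sq_expSum hk₁ hk₂ ha

end InnerProductSpace

end ExpSum

section Gallagher

open FourierTransform Set
open scoped Real

/-- The indicator function of `[-δ, 0)`: `window δ (y - x)` detects whether `y < x ≤ y + δ`. -/
noncomputable def window (δ : ℝ) : ℝ → ℂ :=
  (Ico (-δ) 0).indicator 1

lemma memLp_window (p : ENNReal) (δ : ℝ) : MemLp (window δ) p :=
  memLp_indicator_const p measurableSet_Ico 1 (Or.inr measure_Ico_lt_top.ne)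

lemma re_fourier_window {δ : ℝ} (hδ : 0 ≤ δ) (w : ℝ) :
    (𝓕 (window δ) w).re = ∫ x in -δ..0, Real.cos (2 * π * x * w) := by
  have hint : IntervalIntegrable (fun x ↦ (𝐞 (-(x * w)) : ℂ)) volume (-δ) 0 :=
    Continuous.intervalIntegrable (by fun_prop) _ _
  have hfourier : 𝓕 (window δ) w = ∫ x in -δ..0, (𝐞 (-(x * w)) : ℂ) := by
    rw [Real.fourier_real_eq, intervalIntegral.integral_of_le (neg_nonpos.2 hδ),
      ← integral_Ico_eq_integral_Ioc, ← integral_indicator measurableSet_Ico]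
    congr 1 with x
    simp [window, indicator_apply, Circle.smul_def]
  rw [hfourier, ← reCLM_apply, ← reCLM.intervalIntegral_comp_comm hint]
  refine intervalIntegral.integral_congr fun x _ ↦ ?_
  simp only [reCLM_apply, Real.fourierChar_apply, exp_ofReal_mul_I_re]
  rw [mul_neg, Real.cos_neg, ← mul_assoc]

lemma half_le_norm_fourier_window {δ w : ℝ} (hδ : 0 ≤ δ) (hw : 2 * π * |w| * δ ≤ 1) :
    δ / 2 ≤ ‖𝓕 (window δ) w‖ := by
  have hcos : ∀ x ∈ Icc (-δ) 0, 1 / 2 ≤ Real.cos (2 * π * x * w) := by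
    intro x hx
    have hx_abs : |x| ≤ δ := abs_le.2 ⟨hx.1, hx.2.trans hδ⟩
    have harg : |2 * π * x * w| ≤ 1 := by
      rw [abs_mul, abs_mul, abs_of_pos Real.two_pi_pos]
      calc 2 * π * |x| * |w| ≤ 2 * π * δ * |w| := by gcongr
        _ ≤ 1 := by linarith
    linarith [Real.one_sub_sq_div_two_le_cos (x := 2 * π * x * w),
      (sq_le_one_iff_abs_le_one _).2 harg]
  calc δ / 2 = ∫ _ in -δ..0, (1 / 2 : ℝ) := by
        rw [intervalIntegral.integral_const, smul_eq_mul]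
        ring
    _ ≤ ∫ x in -δ..0, Real.cos (2 * π * x * w) :=
        intervalIntegral.integral_mono_on (neg_nonpos.2 hδ) intervalIntegrable_const
          (Continuous.intervalIntegrable (by fun_prop) _ _) hcos
    _ = (𝓕 (window δ) w).re := (re_fourier_window hδ w).symm
    _ ≤ ‖𝓕 (window δ) w‖ := re_le_norm _

lemma integral_Ioi_inv_smul_eq_integral_comp_exp {E : Type*} [NormedAddCommGroup E]
    [NormedSpace ℝ E] (g : ℝ → E) : ∫ w in Ioi 0, w⁻¹ • g w = ∫ y, g (Real.exp y) := by
  rw [← Real.range_exp, ← image_univ, integral_image_eq_integral_abs_deriv_smul .univ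
    (fun y _ ↦ (Real.hasDerivAt_exp y).hasDerivWithinAt) Real.exp_injective.injOn,
    setIntegral_univ]
  simp only [Real.abs_exp, smul_inv_smul₀ (Real.exp_ne_zero _)]

variable {F : Type*} [NormedAddCommGroup F]

section NormedSpace

variable [NormedSpace ℂ F]

lemma translateSum_window_log {a : ℕ → F} (h₀ : a 0 = 0) (δ y : ℝ) :
    translateSum (window δ) a (fun n : ℕ ↦ Real.log n) y =
      ∑ n ∈ Finset.Ioc ⌊Real.exp y⌋₊ ⌊Real.exp y * Real.exp δ⌋₊, a n := by
  have hmem {n : ℕ} (hn : n ≠ 0) :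
      y - Real.log n ∈ Ico (-δ) 0 ↔ n ∈ Finset.Ioc ⌊Real.exp y⌋₊ ⌊Real.exp y * Real.exp δ⌋₊ := by
    have hn_pos : (0 : ℝ) < n := by positivity
    rw [Finset.mem_Ioc, Nat.floor_lt (by positivity), Nat.le_floor_iff (by positivity),
      ← Real.exp_add, ← Real.lt_log_iff_exp_lt hn_pos, ← Real.log_le_iff_le_exp hn_pos, mem_Ico]
    constructor <;> rintro ⟨h₁, h₂⟩ <;> constructor <;> linarith
  have hterm (n : ℕ) : window δ (y - Real.log n) • a n =
      if n ∈ Finset.Ioc ⌊Real.exp y⌋₊ ⌊Real.exp y * Real.exp δ⌋₊ then a n else 0 := by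
    rcases eq_or_ne n 0 with rfl | hn
    · simp [h₀]
    · simp [window, indicator_apply, hmem hn]
  simp only [translateSum, hterm]
  rw [tsum_eq_sum fun n hn ↦ if_neg hn]
  exact Finset.sum_congr rfl fun n hn ↦ if_pos hn

lemma tsum_cpow_smul_eq_expSum {a : ℕ → F} (h₀ : a 0 = 0) (t : ℝ) :
    ∑' n : ℕ, (n : ℂ) ^ (-(I * t)) • a n = expSum a (fun n : ℕ ↦ Real.log n) (t * (2 * π)⁻¹) := by
  refine tsum_congr fun n ↦ ?_
  rcases eq_or_ne n 0 with rfl | hn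
  · simp only [h₀, smul_zero]
  · rw [cpow_def_of_ne_zero (Nat.cast_ne_zero.2 hn), ← natCast_log, Circle.smul_def,
      Real.fourierChar_apply]
    congr 2
    simp only [RCLike.inner_apply, conj_trivial]
    push_cast
    field_simp

end NormedSpace

variable [InnerProductSpace ℂ F]

lemma intervalIntegral_norm_sq_expSum_le {ι : Type*} [Countable ι] [CompleteSpace F] {a : ι → F}
    (ha : Summable fun i ↦ ‖a i‖) (ν : ι → ℝ) {U δ : ℝ} (hU : 0 ≤ U) (hδ : 0 < δ)
    (hUδ : 2 * π * U * δ ≤ 1) :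
    ∫ w in -U..U, ‖expSum a ν w‖ ^ 2 ≤
      (2 / δ) ^ 2 * ∫ y, ‖translateSum (window δ) a ν y‖ ^ 2 := by
  have hwindow : ∀ w ∈ Ioc (-U) U, δ / 2 ≤ ‖𝓕 (window δ) w‖ := by
    intro w hw
    have hw_abs : |w| ≤ U := abs_le.2 ⟨hw.1.le, hw.2⟩
    refine half_le_norm_fourier_window hδ.le (le_trans ?_ hUδ)
    gcongr
  have hlower := sq_mul_setIntegral_norm_sq_expSum_le (ν := ν)
    (memLp_one_iff_integrable.1 (memLp_window 1 δ)) (memLp_window 2 δ) ha measurableSet_Ioc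
    (by positivity) hwindow
  rw [intervalIntegral.integral_of_le (neg_le_self hU)]
  calc ∫ w in Ioc (-U) U, ‖expSum a ν w‖ ^ 2
      = (2 / δ) ^ 2 * ((δ / 2) ^ 2 * ∫ w in Ioc (-U) U, ‖expSum a ν w‖ ^ 2) := by
        field_simp
    _ ≤ (2 / δ) ^ 2 * ∫ y, ‖translateSum (window δ) a ν y‖ ^ 2 := by gcongr

theorem gallagher_lemma_general [CompleteSpace F] {T : ℝ} (hT : 0 < T) {a : ℕ → F} (h₀ : a 0 = 0)
    (ha : Summable fun n ↦ ‖a n‖) :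
    ∫ t in -T..T, ‖∑' n : ℕ, (n : ℂ) ^ (-(I * t)) • a n‖ ^ 2 ≤
      8 * π * T ^ 2 * ∫ w in Ioi (0 : ℝ),
        ‖∑ n ∈ Finset.Ioc ⌊w⌋₊ ⌊w * Real.exp (1 / T)⌋₊, a n‖ ^ 2 / w := by
  let ν (n : ℕ) : ℝ := Real.log n
  let U := T * (2 * π)⁻¹
  have hbound : ∫ w in -U..U, ‖expSum a ν w‖ ^ 2 ≤
      (2 / (1 / T)) ^ 2 * ∫ y, ‖translateSum (window (1 / T)) a ν y‖ ^ 2 :=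
    intervalIntegral_norm_sq_expSum_le ha ν (by positivity) (by positivity)
      (by simp only [U]; field_simp; rfl)
  calc ∫ t in -T..T, ‖∑' n : ℕ, (n : ℂ) ^ (-(I * t)) • a n‖ ^ 2
      = ∫ t in -T..T, ‖expSum a ν (t * (2 * π)⁻¹)‖ ^ 2 := by
        simp only [tsum_cpow_smul_eq_expSum h₀, ν]
    _ = 2 * π * ∫ w in -U..U, ‖expSum a ν w‖ ^ 2 := by
        rw [intervalIntegral.integral_comp_mul_right (fun w ↦ ‖expSum a ν w‖ ^ 2)
          (by positivity), inv_inv, neg_mul, smul_eq_mul]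
    _ ≤ 2 * π * ((2 / (1 / T)) ^ 2 * ∫ y, ‖translateSum (window (1 / T)) a ν y‖ ^ 2) := by
        gcongr
    _ = 8 * π * T ^ 2 * ∫ y, ‖translateSum (window (1 / T)) a ν y‖ ^ 2 := by
        field_simp
        ring
    _ = 8 * π * T ^ 2 * ∫ w in Ioi (0 : ℝ),
          ‖∑ n ∈ Finset.Ioc ⌊w⌋₊ ⌊w * Real.exp (1 / T)⌋₊, a n‖ ^ 2 / w := by
        simp only [div_eq_inv_mul _ (_ : ℝ), ← smul_eq_mul (_ : ℝ)⁻¹,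
          integral_Ioi_inv_smul_eq_integral_comp_exp, translateSum_window_log h₀, ν]

end Gallagher

/-- **Gallagher's lemma.** There is an absolute constant `C > 0` such that for every
`T ≥ 1` and every finitely supported sequence `(a_n)_{n≥1}` of complex numbers,
`∫_{−T}^{T} |∑_n a_n n^{−it}|² dt ≤ C T² ∫_0^∞ |∑_{w < n ≤ w e^{1/T}} a_n|² dw/w`. -/
theorem gallagher_lemma :
    ∃ C : ℝ, 0 < C ∧ ∀ (T : ℝ), 1 ≤ T → ∀ a : ℕ → ℂ, a 0 = 0 →
      (Set.Finite {n : ℕ | a n ≠ 0}) →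
      (∫ t in (-T)..T, ‖∑' n : ℕ, a n * (n : ℂ) ^ (-(Complex.I * t))‖ ^ 2) ≤
        C * T ^ 2 * ∫ w in Set.Ioi (0 : ℝ),
          ‖∑ n ∈ Finset.Ioc ⌊w⌋₊ ⌊w * Real.exp (1 / T)⌋₊, a n‖ ^ 2 / w := by
  refine ⟨8 * Real.pi, by positivity, fun T hT a h₀ hfin ↦ ?_⟩
  simpa only [smul_eq_mul, mul_comm] using gallagher_lemma_general (zero_lt_one.trans_le hT) h₀
    (summable_of_hasFiniteSupport (hfin.subset fun n hn ↦ norm_ne_zero_iff.1 hn))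
end
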